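/- Assume m_α := min_{k∈{1,…,K}} α_k satisfies 0 < m_α ≤ 1, and assume there exists a Slater point q̄ ∈ ℝ^{S×A} with q̄ ≥ 0, B q̄ = μ and C q̄ = 0. Let η > 0 and let r̄ ∈ ℝ^{S×A}, C̄ ∈ ℝ^{K×(S×A)} and a transition kernel P̄ (with P̄(s|s′,a) ≥ 0 and Σ_{s∈S} P̄(s|s′,a) = 1) be estimates satisfying entrywise |r̄ − r̂| ≤ η, |C̄ − C| ≤ η and |P̄(s|s′,a) − P(s|s′,a)| ≤ η; let B̄ have entries B̄(s,(s′,a)) = δ_{s,s′} − γ·P̄(s|s′,a). Define the empirical LP value V̄ = max{ r̄ᵀq : C̄ q ≤ α + η·1 entrywise, ‖B̄ q − μ‖_∞ ≤ η, q ≥ 0 }, and set D = 1 + (1/m_α)·(1 + |S|/(1−γ)). Then both maxima V and V̄ are attained, and V ≤ V̄ + η and V̄ ≤ V + 2·η·D + η²·D·|S|/(1−γ). -/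

import Mathlib

open Matrix

/-! An optimal solution of either program is turned into a feasible point of the other. Replacing
the entries of `C`, `B` and `r` by estimates within `η` moves each inner product with `q ≥ 0` by at
most `η * ∑ q`, so a true solution, which has mass `1`, is feasible for the empirical program.

Conversely, an empirical solution `q` violates the true constraints by at most
`ε = η * (1 + ∑ q)`. Disintegrate `q` into its state marginal and a policy `π`. Following `π` from
the exact initial distribution produces an occupancy measure `q'` with `B q' = μ`, and since
`‖v - γ Q v‖₁ ≥ (1 - γ) ‖v‖₁` for every column-stochastic `Q`, one has
`‖q - q'‖₁ ≤ |S| ε / (1 - γ)`. Mixing `q'` with the Slater point then restores the cost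
constraints. -/

namespace CMDP

section DotProduct

variable {X : Type*} [Fintype X]

theorem abs_dotProduct_sub_dotProduct_le {v w q : X → ℝ} {c : ℝ} (hvw : ∀ x, |v x - w x| ≤ c)
    (hq : 0 ≤ q) : |v ⬝ᵥ q - w ⬝ᵥ q| ≤ c * ∑ x, q x := by
  rw [← sub_dotProduct, Finset.mul_sum]
  refine (Finset.abs_sum_le_sum_abs _ _).trans (Finset.sum_le_sum fun x _ => ?_)
  rw [abs_mul, abs_of_nonneg (hq x)]
  exact mul_le_mul_of_nonneg_right (hvw x) (hq x)

theorem dotProduct_le_sum_posPart {v : X → ℝ} (hv₀ : 0 ≤ v) (hv₁ : v ≤ 1) (d : X → ℝ) :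
    v ⬝ᵥ d ≤ ∑ x, (d x)⁺ :=
  Finset.sum_le_sum fun x _ => calc
    v x * d x ≤ v x * (d x)⁺ := mul_le_mul_of_nonneg_left (le_posPart _) (hv₀ x)
    _ ≤ (d x)⁺ := mul_le_of_le_one_left (posPart_nonneg _) (hv₁ x)

end DotProduct

section ColStochastic

variable {X : Type*} [Fintype X] [DecidableEq X] {Q : Matrix X X ℝ} {γ : ℝ}

theorem sum_abs_mulVec_le (hQ : Q ∈ colStochastic ℝ X) (v : X → ℝ) :
    ∑ x, |(Q *ᵥ v) x| ≤ ∑ x, |v x| := by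
  rw [← sum_mulVec_of_mem_colStochastic (x := fun x => |v x|) hQ]
  refine Finset.sum_le_sum fun x _ => (Finset.abs_sum_le_sum_abs _ _).trans_eq ?_
  simp only [abs_mul, abs_of_nonneg (nonneg_of_mem_colStochastic hQ), mulVec, dotProduct]

theorem one_sub_mul_sum_abs_le (hQ : Q ∈ colStochastic ℝ X) (hγ : 0 ≤ γ) (v : X → ℝ) :
    (1 - γ) * ∑ x, |v x| ≤ ∑ x, |(v - γ • (Q *ᵥ v)) x| := by
  have htriangle : ∑ x, (|v x| - γ * |(Q *ᵥ v) x|) ≤ ∑ x, |(v - γ • (Q *ᵥ v)) x| := by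
    refine Finset.sum_le_sum fun x _ => ?_
    have := abs_sub_abs_le_abs_sub (v x) (γ * (Q *ᵥ v) x)
    rwa [abs_mul, abs_of_nonneg hγ] at this
  rw [Finset.sum_sub_distrib, ← Finset.mul_sum] at htriangle
  linarith [mul_le_mul_of_nonneg_left (sum_abs_mulVec_le hQ v) hγ]

theorem nonneg_of_sub_smul_mulVec_nonneg (hQ : Q ∈ colStochastic ℝ X) (hγ : γ ∈ Set.Ico 0 1)
    {v : X → ℝ} (hv : 0 ≤ v - γ • (Q *ᵥ v)) : 0 ≤ v := by
  have hsum : ∑ x, (v - γ • (Q *ᵥ v)) x = (1 - γ) * ∑ x, v x := by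
    simp only [Pi.sub_apply, Pi.smul_apply, smul_eq_mul, Finset.sum_sub_distrib, ← Finset.mul_sum,
      sum_mulVec_of_mem_colStochastic hQ]
    ring
  have habs : ∑ x, |v x| ≤ ∑ x, v x := by
    have h := one_sub_mul_sum_abs_le hQ hγ.1 v
    rw [Finset.sum_congr rfl fun x _ => abs_of_nonneg (hv x), hsum] at h
    exact le_of_mul_le_mul_left h (sub_pos.2 hγ.2)
  have heq := (Finset.sum_eq_sum_iff_of_le fun x _ => le_abs_self (v x)).1
    (habs.antisymm' (Finset.sum_le_sum fun x _ => le_abs_self (v x)))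
  exact fun x => abs_eq_self.1 (heq x (Finset.mem_univ x)).symm

theorem exists_sub_smul_mulVec_eq (hQ : Q ∈ colStochastic ℝ X) (hγ : γ ∈ Set.Ico 0 1)
    (b : X → ℝ) : ∃ v, v - γ • (Q *ᵥ v) = b := by
  let L : (X → ℝ) →ₗ[ℝ] (X → ℝ) := LinearMap.id - γ • Q.mulVecLin
  have hinj : Function.Injective L := by
    rw [injective_iff_map_eq_zero]
    intro v hv
    have hv : v - γ • (Q *ᵥ v) = 0 := hv
    refine le_antisymm ?_ (nonneg_of_sub_smul_mulVec_nonneg hQ hγ hv.ge)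
    refine neg_nonneg.1 (nonneg_of_sub_smul_mulVec_nonneg hQ hγ ?_)
    rw [mulVec_neg, smul_neg, sub_neg_eq_add, neg_add_eq_sub, ← neg_sub, hv, neg_zero]
  exact LinearMap.injective_iff_surjective.1 hinj b

end ColStochastic

section Flow

variable {S A : Type*} [DecidableEq S]

/-- The Bellman flow matrix `B` of the discounted kernel `γ P`: the solutions `q ≥ 0` of
`B q = (1 - γ) μ₁` are the occupancy measures of the policies started at `μ₁`. The column of the
kernel `P` at the state-action pair `x` is the law of the state that follows `x`. -/
def flowMatrix (γ : ℝ) (P : Matrix S (S × A) ℝ) : Matrix S (S × A) ℝ :=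
  of fun s x => (if s = x.1 then 1 else 0) - γ * P s x

theorem eq_flowMatrix_iff {γ : ℝ} {P : S → S → A → ℝ} {B : Matrix S (S × A) ℝ} :
    B = flowMatrix γ (of fun s x => P s x.1 x.2) ↔
      ∀ s s' a, B s (s', a) = (if s = s' then 1 else 0) - γ * P s s' a := by
  simp only [← Matrix.ext_iff, Prod.forall, flowMatrix, of_apply]

theorem abs_flowMatrix_sub_flowMatrix_le {γ η : ℝ} (hγ : γ ∈ Set.Icc 0 1)
    {P P' : Matrix S (S × A) ℝ} (hP : ∀ s x, |P' s x - P s x| ≤ η) (s : S) (x : S × A) :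
    |flowMatrix γ P' s x - flowMatrix γ P s x| ≤ η := by
  simp only [flowMatrix, of_apply, sub_sub_sub_cancel_left, ← mul_sub, abs_mul,
    abs_of_nonneg hγ.1, abs_sub_comm (P s x)]
  exact (mul_le_of_le_one_left (abs_nonneg _) hγ.2).trans (hP s x)

variable [Fintype S] [Fintype A]

theorem flowMatrix_mulVec_apply (γ : ℝ) (P : Matrix S (S × A) ℝ) (q : S × A → ℝ) (s : S) :
    (flowMatrix γ P *ᵥ q) s = ∑ a, q (s, a) - γ * (P *ᵥ q) s := by
  simp only [flowMatrix, mulVec, dotProduct, of_apply, sub_mul, Finset.sum_sub_distrib, mul_assoc,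
    ← Finset.mul_sum, Fintype.sum_prod_type, ite_mul, one_mul, zero_mul]
  rw [Finset.sum_eq_single s (fun s' _ hs' => by simp [hs'.symm]) (by simp)]
  simp

variable {γ : ℝ} {P : Matrix S (S × A) ℝ}

theorem sum_flowMatrix_mulVec (hP₁ : ∀ x, ∑ s, P s x = 1) (q : S × A → ℝ) :
    ∑ s, (flowMatrix γ P *ᵥ q) s = (1 - γ) * ∑ x, q x := by
  have hPq : ∑ s, (P *ᵥ q) s = ∑ x, q x := by
    simp only [mulVec, dotProduct]
    rw [Finset.sum_comm]
    simp only [← Finset.sum_mul, hP₁, one_mul]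
  simp only [flowMatrix_mulVec_apply, Finset.sum_sub_distrib, ← Finset.mul_sum, hPq,
    ← Fintype.sum_prod_type]
  ring

theorem sum_le_of_abs_flowMatrix_mulVec_sub_le (hγ : γ < 1) (hP₁ : ∀ x, ∑ s, P s x = 1)
    {μ : S → ℝ} (hμ : ∑ s, μ s = 1 - γ) {q : S × A → ℝ} {δ : ℝ}
    (hq : ∀ s, |(flowMatrix γ P *ᵥ q) s - μ s| ≤ δ) :
    ∑ x, q x ≤ 1 + Fintype.card S * δ / (1 - γ) := by
  have hγ' : 0 < 1 - γ := sub_pos.2 hγ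
  have h : (1 - γ) * ∑ x, q x ≤ (1 - γ) + Fintype.card S * δ := calc
    (1 - γ) * ∑ x, q x = ∑ s, (flowMatrix γ P *ᵥ q) s := (sum_flowMatrix_mulVec hP₁ q).symm
    _ ≤ ∑ s, (μ s + δ) :=
      Finset.sum_le_sum fun s _ => sub_le_iff_le_add'.1 ((le_abs_self _).trans (hq s))
    _ = (1 - γ) + Fintype.card S * δ := by simp [Finset.sum_add_distrib, hμ]
  rwa [one_add_div hγ'.ne', le_div_iff₀' hγ']

end Flow

section Policy

variable {S A : Type*} [Fintype A]

theorem exists_mem_stdSimplex_eq_sum_smul [Nonempty A] {v : A → ℝ} (hv : 0 ≤ v) :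
    ∃ p ∈ stdSimplex ℝ A, v = (∑ a, v a) • p := by
  classical
  obtain h | h := eq_or_ne (∑ a, v a) 0
  · obtain ⟨a⟩ := ‹Nonempty A›
    refine ⟨Pi.single a 1, single_mem_stdSimplex ℝ a, ?_⟩
    rw [h, zero_smul]
    exact (Fintype.sum_eq_zero_iff_of_nonneg hv).1 h
  · refine ⟨(∑ a, v a)⁻¹ • v, ⟨fun a => ?_, ?_⟩, (smul_inv_smul₀ h v).symm⟩
    · exact mul_nonneg (inv_nonneg.2 (Finset.sum_nonneg fun a _ => hv a)) (hv a)
    · simp only [Pi.smul_apply, smul_eq_mul, ← Finset.mul_sum, inv_mul_cancel₀ h]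

/-- The kernel on state-action pairs of the Markov chain that moves by `P` and then picks an action
from the policy `π`. As for `P`, columns are indexed by the current pair. -/
def policyKernel (P : Matrix S (S × A) ℝ) (π : S → A → ℝ) : Matrix (S × A) (S × A) ℝ :=
  of fun x y => π x.1 x.2 * P x.1 y

variable [Fintype S] {P : Matrix S (S × A) ℝ} {π : S → A → ℝ}

theorem policyKernel_mem_colStochastic [DecidableEq (S × A)] (hP₀ : ∀ s x, 0 ≤ P s x)
    (hP₁ : ∀ x, ∑ s, P s x = 1) (hπ : ∀ s, π s ∈ stdSimplex ℝ A) :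
    policyKernel P π ∈ colStochastic ℝ (S × A) := by
  refine mem_colStochastic_iff_sum.2 ⟨fun x y => mul_nonneg ((hπ _).1 _) (hP₀ _ _), fun y => ?_⟩
  simp only [policyKernel, of_apply, Fintype.sum_prod_type, ← Finset.sum_mul, (hπ _).2, one_mul,
    hP₁]

theorem policyKernel_mulVec_apply (P : Matrix S (S × A) ℝ) (π : S → A → ℝ) (q : S × A → ℝ)
    (x : S × A) : (policyKernel P π *ᵥ q) x = π x.1 x.2 * (P *ᵥ q) x.1 := by
  simp only [policyKernel, mulVec, dotProduct, of_apply, mul_assoc, ← Finset.mul_sum]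

variable [DecidableEq S] {γ : ℝ}

theorem sub_smul_policyKernel_mulVec_eq {q : S × A → ℝ}
    (hq : ∀ s a, q (s, a) = (∑ a', q (s, a')) * π s a) :
    q - γ • (policyKernel P π *ᵥ q) = fun x => π x.1 x.2 * (flowMatrix γ P *ᵥ q) x.1 := by
  ext ⟨s, a⟩
  simp only [Pi.sub_apply, Pi.smul_apply, smul_eq_mul, policyKernel_mulVec_apply,
    flowMatrix_mulVec_apply]
  rw [hq s a]
  ring

theorem flowMatrix_mulVec_eq_of_sub_smul_policyKernel (hπ : ∀ s, π s ∈ stdSimplex ℝ A)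
    {μ : S → ℝ} {q : S × A → ℝ}
    (hq : q - γ • (policyKernel P π *ᵥ q) = fun x => π x.1 x.2 * μ x.1) :
    flowMatrix γ P *ᵥ q = μ := by
  ext s
  have hs : ∑ a, (q (s, a) - γ * (π s a * (P *ᵥ q) s)) = ∑ a, π s a * μ s :=
    Finset.sum_congr rfl fun a _ => by
      simpa only [Pi.sub_apply, Pi.smul_apply, smul_eq_mul, policyKernel_mulVec_apply] using
        congrFun hq (s, a)
  simpa only [Finset.sum_sub_distrib, ← Finset.mul_sum, ← Finset.sum_mul, (hπ s).2, one_mul,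
    ← flowMatrix_mulVec_apply] using hs

theorem exists_flowMatrix_mulVec_eq_sum_abs_sub_le [Nonempty A] (hγ : γ ∈ Set.Ico 0 1)
    (hP₀ : ∀ s x, 0 ≤ P s x) (hP₁ : ∀ x, ∑ s, P s x = 1) {μ : S → ℝ} (hμ : 0 ≤ μ)
    {q : S × A → ℝ} (hq : 0 ≤ q) :
    ∃ q' : S × A → ℝ, 0 ≤ q' ∧ flowMatrix γ P *ᵥ q' = μ ∧
      (1 - γ) * ∑ x, |q x - q' x| ≤ ∑ s, |(flowMatrix γ P *ᵥ q) s - μ s| := by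
  classical
  choose π hπ hqπ using fun s =>
    exists_mem_stdSimplex_eq_sum_smul (v := fun a => q (s, a)) fun a => hq (s, a)
  have hQ := policyKernel_mem_colStochastic hP₀ hP₁ hπ
  obtain ⟨q', hq'⟩ := exists_sub_smul_mulVec_eq hQ hγ fun x => π x.1 x.2 * μ x.1
  refine ⟨q', nonneg_of_sub_smul_mulVec_nonneg hQ hγ ?_,
    flowMatrix_mulVec_eq_of_sub_smul_policyKernel hπ hq', ?_⟩
  · rw [hq']
    exact fun x => mul_nonneg ((hπ _).1 _) (hμ _)
  have hresidual : q - q' - γ • (policyKernel P π *ᵥ (q - q')) =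
      fun x => π x.1 x.2 * ((flowMatrix γ P *ᵥ q) x.1 - μ x.1) := by
    rw [mulVec_sub, smul_sub, sub_sub_sub_comm, hq',
      sub_smul_policyKernel_mulVec_eq fun s a => congrFun (hqπ s) a]
    ext x
    exact (mul_sub _ _ _).symm
  calc (1 - γ) * ∑ x, |q x - q' x|
    _ ≤ ∑ x : S × A, |π x.1 x.2 * ((flowMatrix γ P *ᵥ q) x.1 - μ x.1)| := by
      have h := one_sub_mul_sum_abs_le hQ hγ.1 (q - q')
      rwa [hresidual] at h
    _ = ∑ s, |(flowMatrix γ P *ᵥ q) s - μ s| := by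
      simp only [abs_mul, abs_of_nonneg ((hπ _).1 _), Fintype.sum_prod_type, ← Finset.sum_mul,
        (hπ _).2, one_mul]

end Policy

section LinearProgram

variable {S K X : Type*} [Fintype X]

/-- The feasible set of a linear program with inequality constraints `C q ≤ α` and equality
constraints `B q = μ`, the latter relaxed to hold up to `δ` in the supremum norm. -/
def lpFeasible (C : Matrix K X ℝ) (α : K → ℝ) (B : Matrix S X ℝ) (μ : S → ℝ) (δ : ℝ) :
    Set (X → ℝ) :=
  {q | 0 ≤ q ∧ C *ᵥ q ≤ α ∧ ∀ s, |(B *ᵥ q) s - μ s| ≤ δ}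

variable {C C' : Matrix K X ℝ} {α : K → ℝ} {B B' : Matrix S X ℝ} {μ : S → ℝ} {δ : ℝ}

theorem mem_lpFeasible_zero {q : X → ℝ} :
    q ∈ lpFeasible C α B μ 0 ↔ 0 ≤ q ∧ C *ᵥ q ≤ α ∧ B *ᵥ q = μ := by
  simp only [lpFeasible, Set.mem_ofPred_eq, abs_nonpos_iff, sub_eq_zero, funext_iff]

theorem image_lpFeasible (r : X → ℝ) :
    (r ⬝ᵥ ·) '' lpFeasible C α B μ δ = {v | ∃ q : X → ℝ, (∀ x, 0 ≤ q x) ∧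
      (∀ k, (C *ᵥ q) k ≤ α k) ∧ (∀ s, |(B *ᵥ q) s - μ s| ≤ δ) ∧ v = r ⬝ᵥ q} := by
  ext v
  simp only [Set.mem_image, lpFeasible, Set.mem_ofPred_eq, and_assoc, eq_comm (a := v), Pi.le_def,
    Pi.zero_apply]

theorem image_lpFeasible_zero (r : X → ℝ) :
    (r ⬝ᵥ ·) '' lpFeasible C α B μ 0 = {v | ∃ q : X → ℝ, (∀ x, 0 ≤ q x) ∧
      (∀ k, (C *ᵥ q) k ≤ α k) ∧ B *ᵥ q = μ ∧ v = r ⬝ᵥ q} := by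
  ext v
  simp only [Set.mem_image, mem_lpFeasible_zero, Set.mem_ofPred_eq, and_assoc, eq_comm (a := v),
    Pi.le_def, Pi.zero_apply]

theorem isClosed_lpFeasible : IsClosed (lpFeasible C α B μ δ) := by
  have hC : Continuous fun q : X → ℝ => C *ᵥ q := continuous_const.matrix_mulVec continuous_id
  have hB : Continuous fun q : X → ℝ => B *ᵥ q := continuous_const.matrix_mulVec continuous_id
  simp only [lpFeasible, Set.ofPred_and, Set.ofPred_forall]
  exact (isClosed_le continuous_const continuous_id).inter ((isClosed_le hC continuous_const).inter
    (isClosed_iInter fun s => isClosed_le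
      (((continuous_apply s).comp hB).sub continuous_const).abs continuous_const))

theorem exists_isGreatest_image_dotProduct {F : Set (X → ℝ)} (hF : IsClosed F)
    (hne : F.Nonempty) (h₀ : ∀ q ∈ F, 0 ≤ q) {N : ℝ} (hN : ∀ q ∈ F, ∑ x, q x ≤ N)
    (r : X → ℝ) : ∃ q ∈ F, IsGreatest ((r ⬝ᵥ ·) '' F) (r ⬝ᵥ q) := by
  have hcompact : IsCompact F := by
    refine (isCompact_Icc (a := (0 : X → ℝ)) (b := fun _ => N)).of_isClosed_subset hF
      fun q hq => ⟨h₀ q hq, fun x => le_trans ?_ (hN q hq)⟩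
    exact Finset.single_le_sum (fun y _ => h₀ q hq y) (Finset.mem_univ x)
  obtain ⟨q, hq, hmax⟩ := hcompact.exists_isMaxOn hne
    (continuous_const.dotProduct continuous_id : Continuous (r ⬝ᵥ ·)).continuousOn
  exact ⟨q, hq, Set.mem_image_of_mem _ hq, Set.forall_mem_image.2 hmax⟩

theorem mem_lpFeasible_of_abs_sub_le {η N : ℝ} (hη : 0 ≤ η) (hC : ∀ k x, |C' k x - C k x| ≤ η)
    (hB : ∀ s x, |B' s x - B s x| ≤ η) {q : X → ℝ} (hq : q ∈ lpFeasible C α B μ δ)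
    (hN : ∑ x, q x ≤ N) :
    q ∈ lpFeasible C' (fun k => α k + η * N) B' μ (δ + η * N) := by
  obtain ⟨hq₀, hqC, hqB⟩ := hq
  have hηN : η * ∑ x, q x ≤ η * N := mul_le_mul_of_nonneg_left hN hη
  refine ⟨hq₀, fun k => ?_, fun s => ?_⟩
  · have hk : |(C' *ᵥ q) k - (C *ᵥ q) k| ≤ _ := abs_dotProduct_sub_dotProduct_le (hC k) hq₀
    have : (C *ᵥ q) k ≤ α k := hqC k
    linarith [(abs_le.1 hk).2]
  · have hs : |(B' *ᵥ q) s - (B *ᵥ q) s| ≤ _ := abs_dotProduct_sub_dotProduct_le (hB s) hq₀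
    linarith [abs_sub_le ((B' *ᵥ q) s) ((B *ᵥ q) s) (μ s), hqB s]

theorem add_smul_mem_lpFeasible {α' : K → ℝ} {q q' : X → ℝ} (hq : q ∈ lpFeasible C α B μ δ)
    (hq' : q' ∈ lpFeasible C α' B μ δ) {a b : ℝ} (ha : 0 ≤ a) (hb : 0 ≤ b) (hab : a + b = 1) :
    a • q + b • q' ∈ lpFeasible C (a • α + b • α') B μ δ := by
  refine ⟨add_nonneg (smul_nonneg ha hq.1) (smul_nonneg hb hq'.1), ?_, fun s => ?_⟩
  · rw [mulVec_add, mulVec_smul, mulVec_smul]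
    exact add_le_add (smul_le_smul_of_nonneg_left hq.2.1 ha)
      (smul_le_smul_of_nonneg_left hq'.2.1 hb)
  · simp only [mulVec_add, mulVec_smul, Pi.add_apply, Pi.smul_apply]
    simp only [← Real.dist_eq, ← Metric.mem_closedBall]
    exact convex_closedBall (μ s) δ (hq.2.2 s) (hq'.2.2 s) ha hb hab

theorem exists_mem_lpFeasible_of_slater {m ε : ℝ} (hm : 0 < m) (hα : ∀ k, m ≤ α k) (hε : 0 ≤ ε)
    {q q₀ : X → ℝ} (hq₀ : q₀ ∈ lpFeasible C 0 B μ δ)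
    (hq : q ∈ lpFeasible C (fun k => α k + ε) B μ δ) {r : X → ℝ} (hr : 0 ≤ r) :
    ∃ q' ∈ lpFeasible C α B μ δ, (1 - ε / m) * (r ⬝ᵥ q) ≤ r ⬝ᵥ q' := by
  -- Weight `ε / (m + ε)` on the Slater point mixes the thresholds `m + ε` and `0` to exactly `m`.
  have hmε : 0 < m + ε := by linarith
  have ht₀ : 0 ≤ ε / (m + ε) := by positivity
  have ht₁ : 0 ≤ 1 - ε / (m + ε) := sub_nonneg.2 ((div_le_one hmε).2 (by linarith))
  have hmix := add_smul_mem_lpFeasible hq hq₀ ht₁ ht₀ (sub_add_cancel _ _)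
  refine ⟨_, ⟨hmix.1, hmix.2.1.trans fun k => ?_, hmix.2.2⟩, ?_⟩
  · have : (1 - ε / (m + ε)) * (α k + ε) = α k - ε / (m + ε) * (α k - m) := by
      field_simp
      ring
    simp only [Pi.add_apply, Pi.smul_apply, Pi.zero_apply, smul_eq_mul, mul_zero, add_zero, this]
    exact sub_le_self _ (mul_nonneg ht₀ (sub_nonneg.2 (hα k)))
  · have htm : ε / (m + ε) ≤ ε / m := div_le_div_of_nonneg_left hε hm (by linarith)
    rw [dotProduct_add, dotProduct_smul, dotProduct_smul, smul_eq_mul, smul_eq_mul]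
    refine (mul_le_mul_of_nonneg_right (sub_le_sub_left htm 1) ?_).trans (le_add_of_nonneg_right ?_)
    · exact dotProduct_nonneg_of_nonneg hr hq.1
    · exact mul_nonneg ht₀ (dotProduct_nonneg_of_nonneg hr hq₀.1)

end LinearProgram

section RelaxationGap

variable {S A K : Type*} [Fintype S] [DecidableEq S] [Fintype A] {γ : ℝ}
  {P : Matrix S (S × A) ℝ} {μ : S → ℝ} {C : Matrix K (S × A) ℝ} {α : K → ℝ}

theorem sum_le_one_of_mem_lpFeasible_zero (hγ : γ < 1) (hP₁ : ∀ x, ∑ s, P s x = 1)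
    (hμ₁ : ∑ s, μ s = 1 - γ) {q : S × A → ℝ} (hq : q ∈ lpFeasible C α (flowMatrix γ P) μ 0) :
    ∑ x, q x ≤ 1 := by
  simpa using sum_le_of_abs_flowMatrix_mulVec_sub_le hγ hP₁ hμ₁ hq.2.2

theorem nonempty_of_flowMatrix_mulVec_eq (hγ : γ < 1) (hμ₁ : ∑ s, μ s = 1 - γ) {q : S × A → ℝ}
    (hq : flowMatrix γ P *ᵥ q = μ) : Nonempty A := by
  by_contra! hA
  have : ∑ s, (flowMatrix γ P *ᵥ q) s = 0 := by simp [mulVec, dotProduct]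
  rw [hq, hμ₁] at this
  linarith

theorem exists_isGreatest_image_lpFeasible (hγ : γ < 1) (hP₁ : ∀ x, ∑ s, P s x = 1)
    (hμ₁ : ∑ s, μ s = 1 - γ) {δ : ℝ} (hne : (lpFeasible C α (flowMatrix γ P) μ δ).Nonempty)
    (r : S × A → ℝ) :
    ∃ q ∈ lpFeasible C α (flowMatrix γ P) μ δ,
      IsGreatest ((r ⬝ᵥ ·) '' lpFeasible C α (flowMatrix γ P) μ δ) (r ⬝ᵥ q) :=
  exists_isGreatest_image_dotProduct isClosed_lpFeasible hne (fun _ hq => hq.1)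
    (fun _ hq => sum_le_of_abs_flowMatrix_mulVec_sub_le hγ hP₁ hμ₁ hq.2.2) r

theorem exists_mem_lpFeasible_zero_loss_add_excess_le [Nonempty A] (hγ : γ ∈ Set.Ico 0 1)
    (hP₀ : ∀ s x, 0 ≤ P s x) (hP₁ : ∀ x, ∑ s, P s x = 1) (hμ₀ : 0 ≤ μ)
    (hC₀ : ∀ k, 0 ≤ C k) (hC₁ : ∀ k, C k ≤ 1) {r : S × A → ℝ} (hr₀ : 0 ≤ r) (hr₁ : r ≤ 1)
    {δ : ℝ} {q : S × A → ℝ} (hq : q ∈ lpFeasible C α (flowMatrix γ P) μ δ) :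
    ∃ loss excess : ℝ, 0 ≤ loss ∧ 0 ≤ excess ∧
      loss + excess ≤ Fintype.card S * δ / (1 - γ) ∧
      ∃ q' ∈ lpFeasible C (fun k => α k + excess) (flowMatrix γ P) μ 0,
        r ⬝ᵥ q ≤ r ⬝ᵥ q' + loss := by
  obtain ⟨q', hq'₀, hq'μ, hdist⟩ := exists_flowMatrix_mulVec_eq_sum_abs_sub_le hγ hP₀ hP₁ hμ₀ hq.1
  refine ⟨∑ x, (q x - q' x)⁺, ∑ x, (q x - q' x)⁻, Finset.sum_nonneg fun _ _ => posPart_nonneg _,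
    Finset.sum_nonneg fun _ _ => negPart_nonneg _, ?_, q',
    mem_lpFeasible_zero.2 ⟨hq'₀, fun k => ?_, hq'μ⟩, ?_⟩
  · have hδ := Finset.sum_le_card_nsmul Finset.univ _ δ fun s _ => hq.2.2 s
    rw [nsmul_eq_mul, Finset.card_univ] at hδ
    simp only [← Finset.sum_add_distrib, posPart_add_negPart]
    exact (le_div_iff₀' (sub_pos.2 hγ.2)).2 (hdist.trans hδ)
  · have h := dotProduct_le_sum_posPart (hC₀ k) (hC₁ k) (q' - q)
    simp only [Pi.sub_apply, ← neg_sub (q _), posPart_neg, dotProduct_sub] at h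
    have hqk : C k ⬝ᵥ q ≤ α k := hq.2.1 k
    change C k ⬝ᵥ q' ≤ _
    linarith
  · have h := dotProduct_le_sum_posPart hr₀ hr₁ (q - q')
    rw [dotProduct_sub] at h
    simp only [Pi.sub_apply] at h
    linarith

theorem exists_dotProduct_le_add_of_mem_lpFeasible (hγ : γ ∈ Set.Ico 0 1)
    (hP₀ : ∀ s x, 0 ≤ P s x) (hP₁ : ∀ x, ∑ s, P s x = 1) (hμ₀ : 0 ≤ μ)
    (hμ₁ : ∑ s, μ s = 1 - γ) (hC₀ : ∀ k, 0 ≤ C k) (hC₁ : ∀ k, C k ≤ 1) {r : S × A → ℝ}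
    (hr₀ : 0 ≤ r) (hr₁ : r ≤ 1) {m : ℝ} (hm₀ : 0 < m) (hm₁ : m ≤ 1) (hα : ∀ k, m ≤ α k)
    {q₀ : S × A → ℝ} (hq₀ : q₀ ∈ lpFeasible C 0 (flowMatrix γ P) μ 0) {ε : ℝ} (hε : 0 ≤ ε)
    {q : S × A → ℝ} (hq : q ∈ lpFeasible C (fun k => α k + ε) (flowMatrix γ P) μ ε) :
    ∃ q' ∈ lpFeasible C α (flowMatrix γ P) μ 0,
      r ⬝ᵥ q ≤ r ⬝ᵥ q' + ε * (1 / m * (1 + Fintype.card S / (1 - γ))) := by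
  have := nonempty_of_flowMatrix_mulVec_eq hγ.2 hμ₁ (mem_lpFeasible_zero.1 hq₀).2.2
  obtain ⟨loss, excess, hloss, hexcess, htotal, q₁, hq₁, hqq₁⟩ :=
    exists_mem_lpFeasible_zero_loss_add_excess_le hγ hP₀ hP₁ hμ₀ hC₀ hC₁ hr₀ hr₁ hq
  simp only [add_assoc] at hq₁
  obtain ⟨q', hq', hq₁q'⟩ :=
    exists_mem_lpFeasible_of_slater hm₀ hα (add_nonneg hε hexcess) hq₀ hq₁ hr₀
  refine ⟨q', hq', ?_⟩
  have hrq₁ : r ⬝ᵥ q₁ ≤ 1 := calc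
    r ⬝ᵥ q₁ ≤ 1 ⬝ᵥ q₁ := dotProduct_le_dotProduct_of_nonneg_right hr₁ hq₁.1
    _ = ∑ x, q₁ x := one_dotProduct q₁
    _ ≤ 1 := sum_le_one_of_mem_lpFeasible_zero hγ.2 hP₁ hμ₁ hq₁
  have hmix : (ε + excess) / m * (r ⬝ᵥ q₁) ≤ (ε + excess) / m :=
    mul_le_of_le_one_right (by positivity) hrq₁
  calc
    r ⬝ᵥ q ≤ r ⬝ᵥ q' + (ε + excess) / m + loss := by linarith
    _ ≤ r ⬝ᵥ q' + (ε + excess) / m + loss / m := by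
      gcongr
      exact le_div_self hloss hm₀ hm₁
    _ = r ⬝ᵥ q' + (ε + (loss + excess)) / m := by ring
    _ ≤ r ⬝ᵥ q' + (ε + Fintype.card S * ε / (1 - γ)) / m := by gcongr
    _ = _ := by ring

end RelaxationGap

section Estimates

variable {S A K : Type*} [Fintype S] [DecidableEq S] [Fintype A] {γ η : ℝ}
  {P P' : Matrix S (S × A) ℝ} {μ : S → ℝ} {C C' : Matrix K (S × A) ℝ} {α : K → ℝ}

theorem lpFeasible_zero_subset_lpFeasible (hγ : γ ∈ Set.Ico 0 1) (hP₁ : ∀ x, ∑ s, P s x = 1)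
    (hμ₁ : ∑ s, μ s = 1 - γ) (hη : 0 ≤ η) (hC : ∀ k x, |C' k x - C k x| ≤ η)
    (hP : ∀ s x, |P' s x - P s x| ≤ η) :
    lpFeasible C α (flowMatrix γ P) μ 0 ⊆
      lpFeasible C' (fun k => α k + η) (flowMatrix γ P') μ η := fun q hq => by
  simpa only [mul_one, zero_add] using mem_lpFeasible_of_abs_sub_le hη hC
    (abs_flowMatrix_sub_flowMatrix_le ⟨hγ.1, hγ.2.le⟩ hP) hq
    (sum_le_one_of_mem_lpFeasible_zero hγ.2 hP₁ hμ₁ hq)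

theorem dotProduct_le_add_of_mem_lpFeasible_zero (hγ : γ < 1) (hP₁ : ∀ x, ∑ s, P s x = 1)
    (hμ₁ : ∑ s, μ s = 1 - γ) (hη : 0 ≤ η) {r r' : S × A → ℝ} (hr : ∀ x, |r' x - r x| ≤ η)
    {q : S × A → ℝ} (hq : q ∈ lpFeasible C α (flowMatrix γ P) μ 0) : r ⬝ᵥ q ≤ r' ⬝ᵥ q + η := by
  have hmass := sum_le_one_of_mem_lpFeasible_zero hγ hP₁ hμ₁ hq
  have hreward := (abs_le.1 (abs_dotProduct_sub_dotProduct_le hr hq.1)).1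
  linarith [mul_le_of_le_one_right hη hmass]

theorem exists_dotProduct_le_of_mem_lpFeasible_estimate (hγ : γ ∈ Set.Ico 0 1)
    (hP₀ : ∀ s x, 0 ≤ P s x) (hP₁ : ∀ x, ∑ s, P s x = 1) (hμ₀ : 0 ≤ μ)
    (hμ₁ : ∑ s, μ s = 1 - γ) (hC₀ : ∀ k, 0 ≤ C k) (hC₁ : ∀ k, C k ≤ 1) {r r' : S × A → ℝ}
    (hr₀ : 0 ≤ r) (hr₁ : r ≤ 1) {m : ℝ} (hm₀ : 0 < m) (hm₁ : m ≤ 1) (hα : ∀ k, m ≤ α k)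
    {q₀ : S × A → ℝ} (hq₀ : q₀ ∈ lpFeasible C 0 (flowMatrix γ P) μ 0)
    (hη : 0 ≤ η) (hr : ∀ x, |r' x - r x| ≤ η) (hC : ∀ k x, |C' k x - C k x| ≤ η)
    (hP'₁ : ∀ x, ∑ s, P' s x = 1) (hP : ∀ s x, |P' s x - P s x| ≤ η) {D : ℝ}
    (hD : D = 1 + 1 / m * (1 + Fintype.card S / (1 - γ))) {q : S × A → ℝ}
    (hq : q ∈ lpFeasible C' (fun k => α k + η) (flowMatrix γ P') μ η) :
    ∃ q' ∈ lpFeasible C α (flowMatrix γ P) μ 0,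
      r' ⬝ᵥ q ≤ r ⬝ᵥ q' + 2 * η * D + η ^ 2 * D * Fintype.card S / (1 - γ) := by
  have hγ' : 0 < 1 - γ := sub_pos.2 hγ.2
  set N : ℝ := 1 + Fintype.card S * η / (1 - γ) with hN
  have hmass : ∑ x, q x ≤ N := sum_le_of_abs_flowMatrix_mulVec_sub_le hγ.2 hP'₁ hμ₁ hq.2.2
  have hreward : r' ⬝ᵥ q ≤ r ⬝ᵥ q + η * N := by
    have h := (abs_le.1 (abs_dotProduct_sub_dotProduct_le hr hq.1)).2
    linarith [mul_le_mul_of_nonneg_left hmass hη]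
  have hrelax := mem_lpFeasible_of_abs_sub_le hη (fun k x => abs_sub_comm (C k x) _ ▸ hC k x)
    (abs_flowMatrix_sub_flowMatrix_le ⟨hγ.1, hγ.2.le⟩ fun s x => abs_sub_comm (P s x) _ ▸ hP s x)
    hq hmass
  simp only [add_assoc] at hrelax
  obtain ⟨q', hq', hqq'⟩ := exists_dotProduct_le_add_of_mem_lpFeasible hγ hP₀ hP₁ hμ₀ hμ₁ hC₀ hC₁
    hr₀ hr₁ hm₀ hm₁ hα hq₀ (by positivity) hrelax
  refine ⟨q', hq', ?_⟩
  calc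
    r' ⬝ᵥ q ≤ r ⬝ᵥ q + η * N := hreward
    _ ≤ r ⬝ᵥ q' + (η + η * N) * (1 / m * (1 + Fintype.card S / (1 - γ))) + (η + η * N) := by
      linarith
    _ = r ⬝ᵥ q' + 2 * η * D + η ^ 2 * D * Fintype.card S / (1 - γ) := by
      rw [hD, hN]
      ring

end Estimates

end CMDP

theorem empirical_LP_value_sandwich_general
    (S A K : Type*) [Fintype S] [DecidableEq S] [Fintype A]
    (γ : ℝ) (hγ : γ ∈ Set.Ico (0 : ℝ) 1)
    (P : S → S → A → ℝ)
    (hPnn : ∀ s s' a, 0 ≤ P s s' a)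
    (hPsum : ∀ s' a, ∑ s, P s s' a = 1)
    (μ₁ : S → ℝ) (hμnn : ∀ s, 0 ≤ μ₁ s) (hμsum : ∑ s, μ₁ s = 1)
    (B : Matrix S (S × A) ℝ)
    (hB : ∀ s s' a, B s (s', a) = (if s = s' then (1 : ℝ) else 0) - γ * P s s' a)
    (μ : S → ℝ) (hμ : ∀ s, μ s = (1 - γ) * μ₁ s)
    (rhat : S × A → ℝ) (hr : ∀ x, rhat x ∈ Set.Icc (0 : ℝ) 1)
    (C : Matrix K (S × A) ℝ) (hC : ∀ k x, C k x ∈ Set.Icc (0 : ℝ) 1)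
    (α : K → ℝ)
    (mα : ℝ) (hmα : ∀ k, mα ≤ α k)
    (hmα_pos : 0 < mα) (hmα_le : mα ≤ 1)
    (qbar : S × A → ℝ) (hqbar_nn : ∀ x, 0 ≤ qbar x)
    (hqbar_flow : B.mulVec qbar = μ) (hqbar_cost : C.mulVec qbar = 0)
    (η : ℝ) (hη : 0 ≤ η)
    (rbar : S × A → ℝ) (hrbar : ∀ x, |rbar x - rhat x| ≤ η)
    (Cbar : Matrix K (S × A) ℝ) (hCbar : ∀ k x, |Cbar k x - C k x| ≤ η)
    (Pbar : S → S → A → ℝ)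
    (hPbsum : ∀ s' a, ∑ s, Pbar s s' a = 1)
    (hPest : ∀ s s' a, |Pbar s s' a - P s s' a| ≤ η)
    (Bbar : Matrix S (S × A) ℝ)
    (hBbar : ∀ s s' a, Bbar s (s', a) = (if s = s' then (1 : ℝ) else 0) - γ * Pbar s s' a)
    (D : ℝ) (hD : D = 1 + (1 / mα) * (1 + (Fintype.card S : ℝ) / (1 - γ))) :
    ∃ V Vbar : ℝ,
      IsGreatest {v | ∃ q : S × A → ℝ, (∀ x, 0 ≤ q x) ∧
        (∀ k, C.mulVec q k ≤ α k) ∧ B.mulVec q = μ ∧ v = rhat ⬝ᵥ q} V ∧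
      IsGreatest {v | ∃ q : S × A → ℝ, (∀ x, 0 ≤ q x) ∧
        (∀ k, Cbar.mulVec q k ≤ α k + η) ∧ (∀ s, |Bbar.mulVec q s - μ s| ≤ η) ∧
        v = rbar ⬝ᵥ q} Vbar ∧
      V ≤ Vbar + η ∧
      Vbar ≤ V + 2 * η * D + η ^ 2 * D * (Fintype.card S : ℝ) / (1 - γ) := by
  have hμ₀ : 0 ≤ μ := fun s => (hμ s).symm ▸ mul_nonneg (sub_nonneg.2 hγ.2.le) (hμnn s)
  have hμ₁ : ∑ s, μ s = 1 - γ := by simp only [hμ, ← Finset.mul_sum, hμsum, mul_one]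
  obtain rfl := CMDP.eq_flowMatrix_iff.2 hB
  obtain rfl := CMDP.eq_flowMatrix_iff.2 hBbar
  have hP₁ (x : S × A) := hPsum x.1 x.2
  have hPbar₁ (x : S × A) := hPbsum x.1 x.2
  have hP (s : S) (x : S × A) := hPest s x.1 x.2
  have hslater := CMDP.mem_lpFeasible_zero.2 ⟨hqbar_nn, hqbar_cost.le, hqbar_flow⟩
  have hqbar := CMDP.mem_lpFeasible_zero.2
    ⟨hqbar_nn, hqbar_cost.trans_le fun k => hmα_pos.le.trans (hmα k), hqbar_flow⟩
  have hsubset := CMDP.lpFeasible_zero_subset_lpFeasible (α := α) hγ hP₁ hμ₁ hη hCbar hP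
  obtain ⟨q, hq, hV⟩ :=
    CMDP.exists_isGreatest_image_lpFeasible hγ.2 hP₁ hμ₁ ⟨qbar, hqbar⟩ rhat
  obtain ⟨q', hq', hVbar⟩ :=
    CMDP.exists_isGreatest_image_lpFeasible hγ.2 hPbar₁ hμ₁ ⟨qbar, hsubset hqbar⟩ rbar
  refine ⟨rhat ⬝ᵥ q, rbar ⬝ᵥ q', CMDP.image_lpFeasible_zero rhat ▸ hV,
    CMDP.image_lpFeasible rbar ▸ hVbar, ?_, ?_⟩
  · exact (CMDP.dotProduct_le_add_of_mem_lpFeasible_zero hγ.2 hP₁ hμ₁ hη hrbar hq).trans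
      (add_le_add_left (hVbar.2 ⟨q, hsubset hq, rfl⟩) η)
  · obtain ⟨p, hp, hpq'⟩ := CMDP.exists_dotProduct_le_of_mem_lpFeasible_estimate hγ
      (fun s x => hPnn s x.1 x.2) hP₁ hμ₀ hμ₁ (fun k x => (hC k x).1) (fun k x => (hC k x).2)
      (fun x => (hr x).1) (fun x => (hr x).2) hmα_pos hmα_le hmα hslater hη hrbar hCbar hPbar₁ hP
      hD hq'
    linarith [hV.2 ⟨p, hp, rfl⟩]

/-- Deterministic form of the estimation-gap bound (paper's Lemma 2): if all empirical
quantities are within `η` of their true values, then both the true CMDP LP value `V` and the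
empirical LP value `V̄` (with slack `η`) are attained, and they sandwich each other:
`V ≤ V̄ + η` and `V̄ ≤ V + 2ηD + η²·D·|S|/(1−γ)` with
`D = 1 + (1/mα)(1 + |S|/(1−γ))`. -/
theorem empirical_LP_value_sandwich
    (S A K : Type*) [Fintype S] [DecidableEq S] [Fintype A] [Fintype K] [Nonempty K]
    (γ : ℝ) (hγ : γ ∈ Set.Ioo (0:ℝ) 1)
    (P : S → S → A → ℝ)
    (hPnn : ∀ s s' a, 0 ≤ P s s' a)
    (hPsum : ∀ s' a, ∑ s, P s s' a = 1)
    (μ₁ : S → ℝ) (hμnn : ∀ s, 0 ≤ μ₁ s) (hμsum : ∑ s, μ₁ s = 1)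
    (B : Matrix S (S × A) ℝ)
    (hB : ∀ s s' a, B s (s', a) = (if s = s' then (1:ℝ) else 0) - γ * P s s' a)
    (μ : S → ℝ) (hμ : ∀ s, μ s = (1 - γ) * μ₁ s)
    (rhat : S × A → ℝ) (hr : ∀ x, rhat x ∈ Set.Icc (0:ℝ) 1)
    (C : Matrix K (S × A) ℝ) (hC : ∀ k x, C k x ∈ Set.Icc (0:ℝ) 1)
    (α : K → ℝ)
    (mα : ℝ) (hmα : mα = Finset.univ.inf' Finset.univ_nonempty α)
    (hmα_pos : 0 < mα) (hmα_le : mα ≤ 1)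
    (qbar : S × A → ℝ) (hqbar_nn : ∀ x, 0 ≤ qbar x)
    (hqbar_flow : B.mulVec qbar = μ) (hqbar_cost : C.mulVec qbar = 0)
    (η : ℝ) (hη : 0 < η)
    (rbar : S × A → ℝ) (hrbar : ∀ x, |rbar x - rhat x| ≤ η)
    (Cbar : Matrix K (S × A) ℝ) (hCbar : ∀ k x, |Cbar k x - C k x| ≤ η)
    (Pbar : S → S → A → ℝ)
    (hPbnn : ∀ s s' a, 0 ≤ Pbar s s' a)
    (hPbsum : ∀ s' a, ∑ s, Pbar s s' a = 1)
    (hPest : ∀ s s' a, |Pbar s s' a - P s s' a| ≤ η)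
    (Bbar : Matrix S (S × A) ℝ)
    (hBbar : ∀ s s' a, Bbar s (s', a) = (if s = s' then (1:ℝ) else 0) - γ * Pbar s s' a)
    (D : ℝ) (hD : D = 1 + (1 / mα) * (1 + (Fintype.card S : ℝ) / (1 - γ))) :
    ∃ V Vbar : ℝ,
      IsGreatest {v | ∃ q : S × A → ℝ, (∀ x, 0 ≤ q x) ∧
        (∀ k, C.mulVec q k ≤ α k) ∧ B.mulVec q = μ ∧ v = rhat ⬝ᵥ q} V ∧
      IsGreatest {v | ∃ q : S × A → ℝ, (∀ x, 0 ≤ q x) ∧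
        (∀ k, Cbar.mulVec q k ≤ α k + η) ∧ (∀ s, |Bbar.mulVec q s - μ s| ≤ η) ∧
        v = rbar ⬝ᵥ q} Vbar ∧
      V ≤ Vbar + η ∧
      Vbar ≤ V + 2 * η * D + η ^ 2 * D * (Fintype.card S : ℝ) / (1 - γ) :=
  empirical_LP_value_sandwich_general S A K γ ⟨hγ.1.le, hγ.2⟩ P hPnn hPsum μ₁ hμnn hμsum B hB
    μ hμ rhat hr C hC α mα (fun k => hmα.trans_le (Finset.inf'_le α (Finset.mem_univ k))) hmα_pos
    hmα_le qbar hqbar_nn hqbar_flow hqbar_cost η hη.le rbar hrbar Cbar hCbar Pbar hPbsum hPest Bbar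
    hBbar D hD
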